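/- For any set 𝔓 of sequential laws that are locally absolutely continuous with respect to 𝚪, a nonnegative adapted process {M_t} is a nonnegative supermartingale for every law in 𝔓 if and only if it is a nonnegative supermartingale for every law in the closed fork-convex hull cl-f-conv(𝔓). -/

import Mathlib

open MeasureTheory ProbabilityTheory Filter Finset Matrix
open scoped Classical

noncomputable section

namespace SeqTest

/-- `ℝ^d`. -/
abbrev RV (d : ℕ) := Fin d → ℝ

/-- The sequence space `Ω = (ℝ^d)^ℕ`. -/
abbrev Seq (d : ℕ) := ℕ → RV d

variable (d : ℕ)


/-- The first `t` coordinates of a sequence. -/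
def prefixMap (t : ℕ) : Seq d → (Fin t → RV d) := fun ω s => ω s

/-- The law of the first `t` coordinates under a sequential law `μ`. -/
def prefixLaw (μ : Measure (Seq d)) (t : ℕ) : Measure (Fin t → RV d) :=
  μ.map (prefixMap d t)

/-- The natural filtration of the coordinate process: `ℱ t = σ(X_0, …, X_{t-1})`. -/
def F : Filtration ℕ (inferInstance : MeasurableSpace (Seq d)) where
  seq t := ⨆ s ∈ Finset.range t, MeasurableSpace.comap (fun ω : Seq d => ω s) inferInstance
  mono' := by
    intro i j hij
    exact biSup_mono fun s hs => Finset.mem_range.mpr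
      (lt_of_lt_of_le (Finset.mem_range.mp hs) hij)
  le' := by
    intro t
    refine iSup₂_le fun s _ => ?_
    exact measurable_iff_comap_le.mp (measurable_pi_apply s)

/-- Local absolute continuity of sequential laws: every prefix law of `μ` is
absolutely continuous w.r.t. the corresponding prefix law of `Γ`. -/
def LocAC (μ Γ : Measure (Seq d)) : Prop := ∀ t, prefixLaw d μ t ≪ prefixLaw d Γ t

/-- The density (likelihood-ratio) process `Z_t^μ = d(μ|_t)/d(Γ|_t)` evaluated along the path. -/
def Z (μ Γ : Measure (Seq d)) (t : ℕ) (ω : Seq d) : ℝ :=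
  ((prefixLaw d μ t).rnDeriv (prefixLaw d Γ t) (prefixMap d t ω)).toReal

/-- The standard Gaussian measure on `ℝ^d`. -/
def stdGaussian : Measure (RV d) := Measure.pi fun _ => gaussianReal 0 1

/-- `Γ` is the law of an i.i.d. sequence of standard Gaussians: characterized through its
finite-dimensional rectangle probabilities. -/
def IsGamma (Γ : Measure (Seq d)) : Prop :=
  IsProbabilityMeasure Γ ∧
    ∀ (t : ℕ) (A : Fin t → Set (RV d)), (∀ s, MeasurableSet (A s)) →
      prefixLaw d Γ t (Set.univ.pi A) = ∏ s, stdGaussian d (A s)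

/-- `M` is a nonnegative supermartingale for the sequential law `μ`
(w.r.t. the natural filtration). -/
def IsNSM (μ : Measure (Seq d)) (M : ℕ → Seq d → ℝ) : Prop :=
  (∀ t ω, 0 ≤ M t ω) ∧ Supermartingale M (F d) μ

/-- `M` is a nonnegative martingale for the sequential law `μ`. -/
def IsNM (μ : Measure (Seq d)) (M : ℕ → Seq d → ℝ) : Prop :=
  (∀ t ω, 0 ≤ M t ω) ∧ Martingale M (F d) μ


/-- `R` is the `(s,h)`-fork-convex combination of `P` with `Q` (relative to the
reference law `Γ`), described through its density process. -/
def IsFCC (Γ P Q : Measure (Seq d)) (s : ℕ) (h : Seq d → ℝ) (R : Measure (Seq d)) : Prop :=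
  IsProbabilityMeasure P ∧ IsProbabilityMeasure Q ∧ LocAC d P Γ ∧ LocAC d Q Γ ∧
  Measurable[F d s] h ∧ (∀ ω, h ω ∈ Set.Icc (0 : ℝ) 1) ∧
  Γ {ω | h ω < 1 ∧ Z d Q Γ s ω = 0} = 0 ∧
  IsProbabilityMeasure R ∧ LocAC d R Γ ∧
  ∀ t : ℕ, (fun ω => Z d R Γ t ω) =ᵐ[Γ]
    (fun ω => if t ≤ s then Z d P Γ t ω
      else h ω * Z d P Γ t ω + (1 - h ω) * Z d Q Γ t ω * (Z d P Γ s ω / Z d Q Γ s ω))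

/-- A set of sequential laws is fork-convex if it is closed under fork-convex combinations. -/
def IsForkConvex (Γ : Measure (Seq d)) (S : Set (Measure (Seq d))) : Prop :=
  ∀ P ∈ S, ∀ Q ∈ S, ∀ (s : ℕ) (h : Seq d → ℝ) (R : Measure (Seq d)),
    IsFCC d Γ P Q s h R → R ∈ S

/-- The fork-convex hull: the smallest fork-convex set containing `𝔓`. -/
def fconv (Γ : Measure (Seq d)) (𝔓 : Set (Measure (Seq d))) : Set (Measure (Seq d)) :=
  ⋂₀ {S | 𝔓 ⊆ S ∧ IsForkConvex d Γ S}

/-- Convergence of sequential laws: the density processes converge in `L¹(Γ)` at every fixed time. -/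
def TendstoLocL1 (Γ : Measure (Seq d)) (Pn : ℕ → Measure (Seq d)) (P : Measure (Seq d)) : Prop :=
  ∀ t, Tendsto (fun n => ∫ ω, |Z d (Pn n) Γ t ω - Z d P Γ t ω| ∂Γ) atTop (nhds 0)

/-- The closed fork-convex hull: the closure of the fork-convex hull under local `L¹(Γ)`
convergence of density processes. -/
def clfconv (Γ : Measure (Seq d)) (𝔓 : Set (Measure (Seq d))) : Set (Measure (Seq d)) :=
  {P | IsProbabilityMeasure P ∧ LocAC d P Γ ∧
    ∃ Pn : ℕ → Measure (Seq d), (∀ n, Pn n ∈ fconv d Γ 𝔓) ∧ TendstoLocL1 d Γ Pn P}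

/-- `μ` is the law of an i.i.d. sequence with marginal `P`. -/
def IsIIDLaw (μ : Measure (Seq d)) (P : Measure (RV d)) : Prop :=
  IsProbabilityMeasure μ ∧
    ∀ (t : ℕ) (A : Fin t → Set (RV d)), (∀ s, MeasurableSet (A s)) →
      prefixLaw d μ t (Set.univ.pi A) = ∏ s, P (A s)

/-- `μ` is the law of an independent sequence with marginals `Ps 0, Ps 1, …`. -/
def IsProductLaw (μ : Measure (Seq d)) (Ps : ℕ → Measure (RV d)) : Prop :=
  IsProbabilityMeasure μ ∧
    ∀ (t : ℕ) (A : Fin t → Set (RV d)), (∀ s, MeasurableSet (A s)) →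
      prefixLaw d μ t (Set.univ.pi A) = ∏ s : Fin t, Ps s (A s)

/-- The set of i.i.d. sequential laws with marginals in `PP`. -/
def iidLaws (PP : Set (Measure (RV d))) : Set (Measure (Seq d)) :=
  {μ | ∃ P ∈ PP, IsIIDLaw d μ P}

/-- The set of independent-product sequential laws with all marginals in `PP`. -/
def productLaws (PP : Set (Measure (RV d))) : Set (Measure (Seq d)) :=
  {μ | ∃ Ps : ℕ → Measure (RV d), (∀ t, Ps t ∈ PP) ∧ IsProductLaw d μ Ps}




/-- The density of the `d`-dimensional Gaussian with mean `m` and covariance matrix `S`. -/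
def gaussDensityFn (m : RV d) (S : Matrix (Fin d) (Fin d) ℝ) (x : RV d) : ℝ :=
  (2 * Real.pi) ^ (-(d : ℝ) / 2) * S.det ^ (-(1 : ℝ) / 2) *
    Real.exp (-(1 / 2) * ((x - m) ⬝ᵥ (S⁻¹ *ᵥ (x - m))))

/-- A finite mixture of nondegenerate Gaussian densities. -/
def IsGaussianMixture (g : RV d → ℝ) : Prop :=
  ∃ (k : ℕ) (α : Fin k → ℝ) (ms : Fin k → RV d) (Ss : Fin k → Matrix (Fin d) (Fin d) ℝ),
    (∀ i, 0 ≤ α i) ∧ (∑ i, α i = 1) ∧ (∀ i, (Ss i).PosDef) ∧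
    g = fun x => ∑ i, α i * gaussDensityFn d (ms i) (Ss i) x

/-- A log-concave nonnegative function on `ℝ^d`. -/
def IsLogConcaveFn (p : RV d → ℝ) : Prop :=
  (∀ x, 0 ≤ p x) ∧
    ∀ (x y : RV d) (l : ℝ), 0 ≤ l → l ≤ 1 →
      p x ^ l * p y ^ (1 - l) ≤ p (l • x + (1 - l) • y)

/-- A log-concave probability density on `ℝ^d`. -/
def IsLogConcaveDensity (p : RV d → ℝ) : Prop :=
  Measurable p ∧ IsLogConcaveFn d p ∧ ∫ x, p x = 1

/-- The set `𝓛` of laws on `ℝ^d` with a log-concave Lebesgue density. -/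
def logConcaveLaws : Set (Measure (RV d)) :=
  {P | IsProbabilityMeasure P ∧ ∃ p : RV d → ℝ, Measurable p ∧ IsLogConcaveFn d p ∧
    P = volume.withDensity fun x => ENNReal.ofReal (p x)}

/-- The set `𝒢` of nondegenerate Gaussian laws on `ℝ^d`. -/
def gaussianLaws : Set (Measure (RV d)) :=
  {P | ∃ (m : RV d) (S : Matrix (Fin d) (Fin d) ℝ), S.PosDef ∧
    P = volume.withDensity fun x => ENNReal.ofReal (gaussDensityFn d m S x)}

/-- An estimator sequence: a measurable family of (strictly positive) predictable
probability density estimates. -/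
def IsEstimatorSeq (E : (t : ℕ) → (Fin t → RV d) → RV d → ℝ) : Prop :=
  (∀ t, Measurable fun q : (Fin t → RV d) × RV d => E t q.1 q.2) ∧
  (∀ t h x, 0 < E t h x) ∧ (∀ t h, ∫ x, E t h x = 1)

/-- The universal likelihood ratio (ULR) process. Time `t` corresponds to having observed
the `t` samples `ω 0, …, ω (t-1)`. -/
def ULR (E : (t : ℕ) → (Fin t → RV d) → RV d → ℝ) (t : ℕ) (ω : Seq d) : ℝ :=
  if t ≤ d then 1 else
    (∏ j ∈ Finset.Ico d t, E j (fun i : Fin j => ω i) (ω j)) /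
      ⨆ p : {p : RV d → ℝ // IsLogConcaveDensity d p}, ∏ j ∈ Finset.Ico d t, p.1 (ω j)

/-- The prediction (cumulative log-loss) regret of the estimator sequence `E` relative to
the density of `P`. -/
def regret (P : Measure (RV d)) (E : (t : ℕ) → (Fin t → RV d) → RV d → ℝ)
    (t : ℕ) (ω : Seq d) : ℝ :=
  ∑ j ∈ Finset.range t,
    (Real.log ((P.rnDeriv volume (ω j)).toReal) - Real.log (E j (fun i : Fin j => ω i) (ω j)))

/-- The Hellinger distance between two laws on `ℝ^d` (via their Lebesgue densities). -/
def hellinger (P Q : Measure (RV d)) : ℝ :=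
  Real.sqrt ((1 / 2) *
    ∫ x, (Real.sqrt ((P.rnDeriv volume x).toReal) - Real.sqrt ((Q.rnDeriv volume x).toReal)) ^ 2)

/-- The Hellinger distance from `P` to the class of log-concave laws. -/
def dHLC (P : Measure (RV d)) : ℝ :=
  sInf {r | ∃ L ∈ logConcaveLaws d, r = hellinger d P L}

/-- The Kullback–Leibler divergence. -/
def klDivR {α : Type*} [MeasurableSpace α] (P Q : Measure α) : EReal :=
  if P ≪ Q ∧ Integrable (fun x => Real.log ((P.rnDeriv Q x).toReal)) P
  then ((∫ x, Real.log ((P.rnDeriv Q x).toReal) ∂P : ℝ) : EReal) else ⊤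

/-- Membership in `𝒟₁`. -/
def MemD1 (P : Measure (RV d)) : Prop :=
  IsProbabilityMeasure P ∧ P ≪ volume ∧
  Integrable (fun x => max 0 (Real.log ((P.rnDeriv volume x).toReal))) P ∧
  Integrable (fun x => Real.sqrt (∑ i, (x i) ^ 2)) P

/-- The log-likelihood gap `σ_t(P)` between the true density and the log-concave maximum
likelihood. -/
def sigmaT (P : Measure (RV d)) (t : ℕ) (ω : Seq d) : ℝ :=
  (∑ j ∈ Finset.range t, Real.log ((P.rnDeriv volume (ω j)).toReal)) -
    ⨆ p : {p : RV d → ℝ // IsLogConcaveDensity d p},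
      ∑ j ∈ Finset.range t, Real.log (p.1 (ω j))

/-- The mean vector of `P`. -/
def meanVec (P : Measure (RV d)) : RV d := fun i => ∫ x, x i ∂P

/-- `Δ_P = min_{‖v‖=1} E_P |⟨v, X − E_P X⟩|`. -/
def DeltaP (P : Measure (RV d)) : ℝ :=
  sInf {r | ∃ v : RV d, (∑ i, (v i) ^ 2) = 1 ∧
    r = ∫ x, |∑ i, v i * (x i - meanVec d P i)| ∂P}

/-- The class `𝒟_{Box,Lip,B}`: laws with a `1`-Lipschitz density supported on `[-1,1]^d`
taking values in `[1/B, B]` there. -/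
def DBoxLip (B : ℝ) : Set (Measure (RV d)) :=
  {P | IsProbabilityMeasure P ∧ ∃ p : RV d → ℝ, Measurable p ∧
    P = volume.withDensity (fun x => ENNReal.ofReal (p x)) ∧
    (∀ x, ¬ (∀ i, |x i| ≤ 1) → p x = 0) ∧
    (∀ x, (∀ i, |x i| ≤ 1) → 1 / B ≤ p x ∧ p x ≤ B) ∧
    (∀ x y, (∀ i, |x i| ≤ 1) → (∀ i, |y i| ≤ 1) →
      |p x - p y| ≤ Real.sqrt (∑ i, (x i - y i) ^ 2))}

/-!
By a change of measure, `M` is a nonnegative supermartingale for `P` exactly when `M * Z^P` is a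
supermartingale under `Γ`, allowing the value `∞` for integrals. (Integrability of `M` under `P`
then comes for free, because `ℱ 0` is trivial and so `M 0` is constant.) Fork-convexity and closure
thus become statements about processes under the single measure `Γ`. A fork-convex combination
switches at time `s` from `M * Z^P` to a combination of `M * Z^P` and `M * Z^Q` with nonnegative
`ℱ s`-measurable coefficients, and this preserves the supermartingale inequality. For an `L¹` limit
of densities, truncation gives `∫_B M_{t+1} Z_{t+1} ≤ liminf ∫_B M_{t+1} Z^n_{t+1}`, while
`∫_B M_t Z^n_t` converges on every set `B` on which `M_t` is bounded; such sets exhaust the space.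
-/

open scoped ENNReal Topology

section Lebesgue

variable {α ι : Type*} {m m0 : MeasurableSpace α} {μ : Measure α}

lemma lintegral_mul_le_lintegral_mul_of_setLIntegral_le (hm : m ≤ m0)
    {f f' g : α → ℝ≥0∞} (hf : Measurable f) (hf' : Measurable f') (hg : Measurable[m] g)
    (h : ∀ A, MeasurableSet[m] A → ∫⁻ x in A, f x ∂μ ≤ ∫⁻ x in A, f' x ∂μ) :
    ∫⁻ x, g x * f x ∂μ ≤ ∫⁻ x, g x * f' x ∂μ := by
  have lintegral_trim_withDensity : ∀ {u : α → ℝ≥0∞}, Measurable u →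
      ∫⁻ x, g x * u x ∂μ = ∫⁻ x, g x ∂(μ.withDensity u).trim hm := fun {u} hu => by
    rw [lintegral_trim hm hg, lintegral_withDensity_eq_lintegral_mul μ hu (hg.mono hm le_rfl)]
    simp only [Pi.mul_apply, mul_comm]
  rw [lintegral_trim_withDensity hf, lintegral_trim_withDensity hf']
  refine lintegral_mono' (Measure.le_iff.mpr fun A hA => ?_) le_rfl
  rw [trim_measurableSet_eq hm hA, trim_measurableSet_eq hm hA, withDensity_apply _ (hm A hA),
    withDensity_apply _ (hm A hA)]
  exact h A hA

lemma setLIntegral_mul_ofReal_le_add {f : α → ℝ≥0∞} {z w : α → ℝ} {B : Set α} {K : ℝ≥0∞}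
    (hB : MeasurableSet B) (hfK : ∀ x ∈ B, f x ≤ K) (hz : Integrable z μ) (hw : Integrable w μ) :
    ∫⁻ x in B, f x * ENNReal.ofReal (z x) ∂μ ≤
      ∫⁻ x in B, f x * ENNReal.ofReal (w x) ∂μ + K * ENNReal.ofReal (∫ x, |z x - w x| ∂μ) := by
  have hzw : Integrable (fun x => |z x - w x|) μ := (hz.sub hw).abs
  have hzw_meas : AEMeasurable (fun x => ENNReal.ofReal |z x - w x|) (μ.restrict B) :=
    hzw.aemeasurable.ennreal_ofReal.restrict
  calc ∫⁻ x in B, f x * ENNReal.ofReal (z x) ∂μ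
      ≤ ∫⁻ x in B, f x * ENNReal.ofReal (w x) + K * ENNReal.ofReal |z x - w x| ∂μ := by
        refine setLIntegral_mono' hB fun x hx => ?_
        calc f x * ENNReal.ofReal (z x)
            ≤ f x * ENNReal.ofReal (w x + |z x - w x|) := by
              gcongr
              linarith [le_abs_self (z x - w x)]
          _ ≤ f x * (ENNReal.ofReal (w x) + ENNReal.ofReal |z x - w x|) := by
              gcongr
              exact ENNReal.ofReal_add_le
          _ ≤ f x * ENNReal.ofReal (w x) + K * ENNReal.ofReal |z x - w x| := by
              rw [mul_add]
              gcongr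
              exact hfK x hx
    _ = ∫⁻ x in B, f x * ENNReal.ofReal (w x) ∂μ +
          K * ∫⁻ x in B, ENNReal.ofReal |z x - w x| ∂μ := by
        rw [lintegral_add_right' _ (hzw_meas.const_mul K), lintegral_const_mul'' _ hzw_meas]
    _ ≤ ∫⁻ x in B, f x * ENNReal.ofReal (w x) ∂μ +
          K * ENNReal.ofReal (∫ x, |z x - w x| ∂μ) := by
        rw [ofReal_integral_eq_lintegral_ofReal hzw (Eventually.of_forall fun _ => abs_nonneg _)]
        gcongr
        exact Measure.restrict_le_self

variable {l : Filter ι} {z : ι → α → ℝ} {w : α → ℝ} {B : Set α} {f : α → ℝ≥0∞}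

lemma tendsto_setLIntegral_mul_ofReal (hB : MeasurableSet B) {K : ℝ≥0∞} (hK : K ≠ ∞)
    (hfK : ∀ x ∈ B, f x ≤ K) (hz : ∀ i, Integrable (z i) μ) (hw : Integrable w μ)
    (hlim : Tendsto (fun i => ∫ x, |z i x - w x| ∂μ) l (𝓝 0)) :
    Tendsto (fun i => ∫⁻ x in B, f x * ENNReal.ofReal (z i x) ∂μ) l
      (𝓝 (∫⁻ x in B, f x * ENNReal.ofReal (w x) ∂μ)) := by
  have herr : Tendsto (fun i => K * ENNReal.ofReal (∫ x, |z i x - w x| ∂μ)) l (𝓝 0) := by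
    simpa using ENNReal.Tendsto.const_mul (ENNReal.tendsto_ofReal hlim) (Or.inr hK)
  have hlower := ENNReal.Tendsto.sub
    (tendsto_const_nhds (x := ∫⁻ x in B, f x * ENNReal.ofReal (w x) ∂μ)) herr
    (Or.inr ENNReal.zero_ne_top)
  have hupper := (tendsto_const_nhds (x := ∫⁻ x in B, f x * ENNReal.ofReal (w x) ∂μ)).add herr
  rw [tsub_zero] at hlower
  rw [add_zero] at hupper
  refine tendsto_of_tendsto_of_tendsto_of_le_of_le hlower hupper (fun i => ?_)
    fun i => setLIntegral_mul_ofReal_le_add hB hfK (hz i) hw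
  simp only [tsub_le_iff_right, abs_sub_comm (z i _)]
  exact setLIntegral_mul_ofReal_le_add hB hfK hw (hz i)

lemma setLIntegral_mul_ofReal_le_liminf [NeBot l] (hB : MeasurableSet B)
    (hf : AEMeasurable f μ) (hz : ∀ i, Integrable (z i) μ) (hw : Integrable w μ)
    (hlim : Tendsto (fun i => ∫ x, |z i x - w x| ∂μ) l (𝓝 0)) :
    ∫⁻ x in B, f x * ENNReal.ofReal (w x) ∂μ ≤
      liminf (fun i => ∫⁻ x in B, f x * ENNReal.ofReal (z i x) ∂μ) l := by
  have iSup_truncation : ∀ x, f x * ENNReal.ofReal (w x) =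
      ⨆ k : ℕ, min (f x) k * ENNReal.ofReal (w x) := fun x => by
    rw [← ENNReal.iSup_mul, ← inf_iSup_eq, ENNReal.iSup_natCast, inf_top_eq]
  have truncation_aemeasurable : ∀ k : ℕ, AEMeasurable
      (fun x => min (f x) k * ENNReal.ofReal (w x)) (μ.restrict B) := fun k =>
    ((hf.min aemeasurable_const).mul hw.aemeasurable.ennreal_ofReal).restrict
  simp only [iSup_truncation]
  rw [lintegral_iSup' truncation_aemeasurable
    (Eventually.of_forall fun x j k hjk => by dsimp only; gcongr)]
  refine iSup_le fun k => ?_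
  rw [← (tendsto_setLIntegral_mul_ofReal hB (ENNReal.natCast_ne_top k)
    (fun _ _ => min_le_right _ _) hz hw hlim).liminf_eq]
  refine liminf_le_liminf (Eventually.of_forall fun i => lintegral_mono fun x => ?_)
  gcongr
  exact min_le_left _ _

end Lebesgue

section ENNRealSupermartingale

variable {Ω ι : Type*} {m0 : MeasurableSpace Ω} {μ : Measure Ω} {𝒢 : Filtration ℕ m0}

/-- A supermartingale with values in `[0, ∞]`. The conditional expectation inequality is encoded
by its integrals over `𝒢 t`-measurable sets, so that no integrability is required. -/
structure ENNRealSupermartingale (Y : ℕ → Ω → ℝ≥0∞) (𝒢 : Filtration ℕ m0) (μ : Measure Ω) :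
    Prop where
  measurable : ∀ t, Measurable[𝒢 t] (Y t)
  setLIntegral_succ_le : ∀ t A, MeasurableSet[𝒢 t] A →
    ∫⁻ ω in A, Y (t + 1) ω ∂μ ≤ ∫⁻ ω in A, Y t ω ∂μ

namespace ENNRealSupermartingale

variable {Y Y' W : ℕ → Ω → ℝ≥0∞}

lemma setLIntegral_mul_succ_le (hY : ENNRealSupermartingale Y 𝒢 μ) {t : ℕ} {A : Set Ω}
    (hA : MeasurableSet[𝒢 t] A) {g : Ω → ℝ≥0∞} (hg : Measurable[𝒢 t] g) :
    ∫⁻ ω in A, g ω * Y (t + 1) ω ∂μ ≤ ∫⁻ ω in A, g ω * Y t ω ∂μ := by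
  have hY_meas : ∀ u, Measurable (Y u) := fun u => (hY.measurable u).mono (𝒢.le u) le_rfl
  refine lintegral_mul_le_lintegral_mul_of_setLIntegral_le (𝒢.le t) (hY_meas _) (hY_meas _) hg
    fun B hB => ?_
  rw [Measure.restrict_restrict (𝒢.le t B hB)]
  exact hY.setLIntegral_succ_le t _ (hB.inter hA)

lemma fork (hY : ENNRealSupermartingale Y 𝒢 μ) (hY' : ENNRealSupermartingale Y' 𝒢 μ)
    {s : ℕ} {a b : Ω → ℝ≥0∞} (ha : Measurable[𝒢 s] a) (hb : Measurable[𝒢 s] b)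
    (hW : ∀ t, Measurable[𝒢 t] (W t)) (hpre : ∀ t ≤ s, W t =ᵐ[μ] Y t)
    (hpost : ∀ t, s ≤ t → W t =ᵐ[μ] fun ω => a ω * Y t ω + b ω * Y' t ω) :
    ENNRealSupermartingale W 𝒢 μ := by
  refine ⟨hW, fun t A hA => ?_⟩
  rcases lt_or_ge t s with hts | hst
  · rw [lintegral_congr_ae (ae_restrict_of_ae (hpre _ hts)),
      lintegral_congr_ae (ae_restrict_of_ae (hpre _ hts.le))]
    exact hY.setLIntegral_succ_le t A hA
  · have ha_t : Measurable[𝒢 t] a := ha.mono (𝒢.mono hst) le_rfl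
    have hb_t : Measurable[𝒢 t] b := hb.mono (𝒢.mono hst) le_rfl
    have setLIntegral_post : ∀ u, t ≤ u → ∫⁻ ω in A, W u ω ∂μ =
        ∫⁻ ω in A, a ω * Y u ω ∂μ + ∫⁻ ω in A, b ω * Y' u ω ∂μ := fun u htu => by
      rw [lintegral_congr_ae (ae_restrict_of_ae (hpost u (hst.trans htu))), lintegral_add_left]
      exact (ha.mono (𝒢.le s) le_rfl).mul ((hY.measurable u).mono (𝒢.le u) le_rfl)
    rw [setLIntegral_post _ t.le_succ, setLIntegral_post _ le_rfl]
    exact add_le_add (hY.setLIntegral_mul_succ_le hA ha_t) (hY'.setLIntegral_mul_succ_le hA hb_t)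

lemma mul_ofReal_of_tendsto {l : Filter ι} [NeBot l] {z : ι → ℕ → Ω → ℝ} {w : ℕ → Ω → ℝ}
    (hY : ∀ t, Measurable[𝒢 t] (Y t)) (hY_ne_top : ∀ t ω, Y t ω ≠ ∞)
    (hw : ∀ t, Measurable[𝒢 t] (w t))
    (hz_int : ∀ i t, Integrable (z i t) μ) (hw_int : ∀ t, Integrable (w t) μ)
    (hlim : ∀ t, Tendsto (fun i => ∫ ω, |z i t ω - w t ω| ∂μ) l (𝓝 0))
    (hz : ∀ i, ENNRealSupermartingale (fun t ω => Y t ω * ENNReal.ofReal (z i t ω)) 𝒢 μ) :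
    ENNRealSupermartingale (fun t ω => Y t ω * ENNReal.ofReal (w t ω)) 𝒢 μ := by
  refine ⟨fun t => (hY t).mul (hw t).ennreal_ofReal, fun t A hA => ?_⟩
  let B : ℕ → Set Ω := fun k => A ∩ {ω | Y t ω ≤ k}
  have hB : ∀ k, MeasurableSet[𝒢 t] (B k) := fun k =>
    hA.inter (measurableSet_le (hY t) measurable_const)
  have hB_mono : Monotone B := fun j k hjk =>
    Set.inter_subset_inter_right A fun ω (hω : Y t ω ≤ j) => hω.trans (Nat.cast_le.mpr hjk)
  have iUnion_B : ⋃ k, B k = A := by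
    rw [← Set.inter_iUnion, Set.inter_eq_left]
    intro ω _
    obtain ⟨k, hk⟩ := ENNReal.exists_nat_gt (hY_ne_top t ω)
    exact Set.mem_iUnion.mpr ⟨k, hk.le⟩
  have le_on_B : ∀ k, ∫⁻ ω in B k, Y (t + 1) ω * ENNReal.ofReal (w (t + 1) ω) ∂μ ≤
      ∫⁻ ω in B k, Y t ω * ENNReal.ofReal (w t ω) ∂μ := fun k =>
    calc ∫⁻ ω in B k, Y (t + 1) ω * ENNReal.ofReal (w (t + 1) ω) ∂μ
        ≤ liminf (fun i => ∫⁻ ω in B k, Y (t + 1) ω * ENNReal.ofReal (z i (t + 1) ω) ∂μ) l :=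
          setLIntegral_mul_ofReal_le_liminf (𝒢.le t _ (hB k))
            ((hY _).mono (𝒢.le _) le_rfl).aemeasurable (fun i => hz_int i _) (hw_int _) (hlim _)
      _ ≤ liminf (fun i => ∫⁻ ω in B k, Y t ω * ENNReal.ofReal (z i t ω) ∂μ) l :=
          liminf_le_liminf <| Eventually.of_forall fun i =>
            (hz i).setLIntegral_succ_le t _ (hB k)
      _ = ∫⁻ ω in B k, Y t ω * ENNReal.ofReal (w t ω) ∂μ :=
          (tendsto_setLIntegral_mul_ofReal (𝒢.le t _ (hB k)) (ENNReal.natCast_ne_top k)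
            (fun _ hω => hω.2) (fun i => hz_int i t) (hw_int t) (hlim t)).liminf_eq
  rw [← iUnion_B, setLIntegral_iUnion_of_directed _ hB_mono.directed_le,
    setLIntegral_iUnion_of_directed _ hB_mono.directed_le]
  exact iSup_mono le_on_B

end ENNRealSupermartingale

lemma supermartingale_iff_ennrealSupermartingale_ofReal [IsFiniteMeasure μ] {M : ℕ → Ω → ℝ}
    (hM_nonneg : ∀ t ω, 0 ≤ M t ω) (hM : StronglyAdapted 𝒢 M) (hM_zero : Integrable (M 0) μ) :
    Supermartingale M 𝒢 μ ↔
      ENNRealSupermartingale (fun t ω => ENNReal.ofReal (M t ω)) 𝒢 μ := by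
  have setIntegral_succ_le_iff : (∀ t, Integrable (M t) μ) → ∀ t A,
      (∫ ω in A, M (t + 1) ω ∂μ ≤ ∫ ω in A, M t ω ∂μ ↔
        ∫⁻ ω in A, ENNReal.ofReal (M (t + 1) ω) ∂μ ≤
          ∫⁻ ω in A, ENNReal.ofReal (M t ω) ∂μ) := fun hint t A => by
    rw [← ofReal_integral_eq_lintegral_ofReal (hint _).restrict
        (Eventually.of_forall (hM_nonneg _)),
      ← ofReal_integral_eq_lintegral_ofReal (hint _).restrict
        (Eventually.of_forall (hM_nonneg _)),
      ENNReal.ofReal_le_ofReal_iff (integral_nonneg (hM_nonneg _))]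
  refine ⟨fun h => ⟨fun t => (hM t).measurable.ennreal_ofReal, fun t A hA =>
    (setIntegral_succ_le_iff h.integrable t A).mp (h.setIntegral_le t.le_succ hA)⟩, fun h => ?_⟩
  have hint : ∀ t, Integrable (M t) μ := fun t => by
    induction t with
    | zero => exact hM_zero
    | succ t ih =>
      refine ⟨((hM _).mono (𝒢.le _)).aestronglyMeasurable, ?_⟩
      rw [hasFiniteIntegral_iff_ofReal (Eventually.of_forall (hM_nonneg _))]
      calc ∫⁻ ω, ENNReal.ofReal (M (t + 1) ω) ∂μ
          ≤ ∫⁻ ω, ENNReal.ofReal (M t ω) ∂μ := by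
            simpa only [setLIntegral_univ] using h.setLIntegral_succ_le t Set.univ .univ
        _ < ∞ := (hasFiniteIntegral_iff_ofReal (Eventually.of_forall (hM_nonneg _))).mp ih.2
  exact supermartingale_of_setIntegral_succ_le hM hint fun t A hA =>
    (setIntegral_succ_le_iff hint t A).mpr (h.setLIntegral_succ_le t A hA)

end ENNRealSupermartingale

section SequenceSpace

variable {d} {μ Γ P Q R : Measure (Seq d)}

lemma measurable_prefixMap (t : ℕ) : Measurable (prefixMap d t) :=
  measurable_pi_lambda _ fun s => measurable_pi_apply (s : ℕ)

lemma F_eq_comap_prefixMap (t : ℕ) :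
    F d t = MeasurableSpace.comap (prefixMap d t) inferInstance := by
  change ⨆ s ∈ Finset.range t, _ = _
  simp only [MeasurableSpace.pi, MeasurableSpace.comap_iSup, MeasurableSpace.comap_comp,
    Finset.mem_range, iSup_subtype', ← Fin.equivSubtype.iSup_comp]
  rfl

lemma F_zero : F d 0 = ⊥ := by
  change ⨆ s ∈ Finset.range 0, _ = _
  simp only [Finset.range_zero, Finset.notMem_empty, iSup_false, iSup_bot]

lemma Z_nonneg (μ Γ : Measure (Seq d)) (t : ℕ) (ω : Seq d) : 0 ≤ Z d μ Γ t ω :=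
  ENNReal.toReal_nonneg

lemma measurable_Z (μ Γ : Measure (Seq d)) (t : ℕ) : Measurable[F d t] (Z d μ Γ t) := by
  rw [F_eq_comap_prefixMap]
  exact (Measure.measurable_rnDeriv _ _).ennreal_toReal.comp (comap_measurable _)

lemma integrable_Z (μ Γ : Measure (Seq d)) [IsFiniteMeasure μ] (t : ℕ) :
    Integrable (Z d μ Γ t) Γ := by
  have : IsFiniteMeasure (prefixLaw d μ t) := Measure.isFiniteMeasure_map μ _
  exact Measure.integrable_toReal_rnDeriv.comp_measurable (measurable_prefixMap t)

lemma LocAC.setLIntegral_mul_Z [IsFiniteMeasure μ] [IsFiniteMeasure Γ] (hμ : LocAC d μ Γ) {t : ℕ}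
    {A : Set (Seq d)} (hA : MeasurableSet[F d t] A) {f : Seq d → ℝ≥0∞} (hf : Measurable[F d t] f) :
    ∫⁻ ω in A, f ω * ENNReal.ofReal (Z d μ Γ t ω) ∂Γ = ∫⁻ ω in A, f ω ∂μ := by
  have : IsFiniteMeasure (prefixLaw d μ t) := Measure.isFiniteMeasure_map μ _
  have : IsFiniteMeasure (prefixLaw d Γ t) := Measure.isFiniteMeasure_map Γ _
  rw [F_eq_comap_prefixMap] at hA hf
  obtain ⟨B, hB, rfl⟩ := hA
  obtain ⟨g, hg, rfl⟩ := hf.exists_eq_measurable_comp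
  let r := (prefixLaw d μ t).rnDeriv (prefixLaw d Γ t)
  have hr : Measurable r := Measure.measurable_rnDeriv _ _
  calc ∫⁻ ω in prefixMap d t ⁻¹' B, g (prefixMap d t ω) * ENNReal.ofReal (Z d μ Γ t ω) ∂Γ
      = ∫⁻ x in B, g x * ENNReal.ofReal (r x).toReal ∂(prefixLaw d Γ t) :=
        (setLIntegral_map hB (hg.mul hr.ennreal_toReal.ennreal_ofReal)
          (measurable_prefixMap t)).symm
    _ = ∫⁻ x in B, r x * g x ∂(prefixLaw d Γ t) := by
        refine lintegral_congr_ae (ae_restrict_of_ae ?_)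
        filter_upwards [Measure.rnDeriv_ne_top (prefixLaw d μ t) (prefixLaw d Γ t)] with x hx
        rw [ENNReal.ofReal_toReal hx, mul_comm]
    _ = ∫⁻ x in B, g x ∂(prefixLaw d μ t) := setLIntegral_rnDeriv_mul (hμ t) hg.aemeasurable hB
    _ = ∫⁻ ω in prefixMap d t ⁻¹' B, g (prefixMap d t ω) ∂μ :=
        setLIntegral_map hB hg (measurable_prefixMap t)

variable {M : ℕ → Seq d → ℝ}

lemma measurable_ofReal_mul_ofReal_Z (hM : StronglyAdapted (F d) M) (μ Γ : Measure (Seq d))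
    (t : ℕ) :
    Measurable[F d t] fun ω => ENNReal.ofReal (M t ω) * ENNReal.ofReal (Z d μ Γ t ω) :=
  (hM t).measurable.ennreal_ofReal.mul (measurable_Z μ Γ t).ennreal_ofReal

lemma LocAC.supermartingale_iff_ennrealSupermartingale_mul_Z [IsFiniteMeasure μ]
    [IsFiniteMeasure Γ] (hμ : LocAC d μ Γ) (hM_nonneg : ∀ t ω, 0 ≤ M t ω)
    (hM : StronglyAdapted (F d) M) :
    Supermartingale M (F d) μ ↔ ENNRealSupermartingale
      (fun t ω => ENNReal.ofReal (M t ω) * ENNReal.ofReal (Z d μ Γ t ω)) (F d) Γ := by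
  have hM_ofReal : ∀ t, Measurable[F d t] fun ω => ENNReal.ofReal (M t ω) := fun t =>
    (hM t).measurable.ennreal_ofReal
  have hM_zero : Integrable (M 0) μ := by
    obtain ⟨c, hc⟩ := stronglyMeasurable_bot_iff.mp (F_zero (d := d) ▸ hM 0)
    exact hc ▸ integrable_const c
  have setLIntegral_succ_le_iff : ∀ t A, MeasurableSet[F d t] A →
      (∫⁻ ω in A, ENNReal.ofReal (M (t + 1) ω) ∂μ ≤ ∫⁻ ω in A, ENNReal.ofReal (M t ω) ∂μ ↔
        ∫⁻ ω in A, ENNReal.ofReal (M (t + 1) ω) * ENNReal.ofReal (Z d μ Γ (t + 1) ω) ∂Γ ≤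
          ∫⁻ ω in A, ENNReal.ofReal (M t ω) * ENNReal.ofReal (Z d μ Γ t ω) ∂Γ) := fun t A hA => by
    rw [hμ.setLIntegral_mul_Z hA (hM_ofReal t),
      hμ.setLIntegral_mul_Z ((F d).mono t.le_succ A hA) (hM_ofReal (t + 1))]
  rw [supermartingale_iff_ennrealSupermartingale_ofReal hM_nonneg hM hM_zero]
  exact ⟨fun h => ⟨measurable_ofReal_mul_ofReal_Z hM μ Γ, fun t A hA =>
      (setLIntegral_succ_le_iff t A hA).mp (h.setLIntegral_succ_le t A hA)⟩,
    fun h => ⟨hM_ofReal, fun t A hA =>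
      (setLIntegral_succ_le_iff t A hA).mpr (h.setLIntegral_succ_le t A hA)⟩⟩

lemma LocAC.isNSM_iff_ennrealSupermartingale_mul_Z [IsFiniteMeasure μ] [IsFiniteMeasure Γ]
    (hμ : LocAC d μ Γ) :
    IsNSM d μ M ↔ (∀ t ω, 0 ≤ M t ω) ∧ StronglyAdapted (F d) M ∧ ENNRealSupermartingale
      (fun t ω => ENNReal.ofReal (M t ω) * ENNReal.ofReal (Z d μ Γ t ω)) (F d) Γ :=
  ⟨fun ⟨hM_nonneg, hM⟩ => ⟨hM_nonneg, hM.1,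
      (hμ.supermartingale_iff_ennrealSupermartingale_mul_Z hM_nonneg hM.1).mp hM⟩,
    fun ⟨hM_nonneg, hM, hMZ⟩ => ⟨hM_nonneg,
      (hμ.supermartingale_iff_ennrealSupermartingale_mul_Z hM_nonneg hM).mpr hMZ⟩⟩

/-- At the fork time itself the formula holds because `Z^Q_s` cancels wherever `h < 1`. -/
lemma IsFCC.ofReal_Z_ae_eq {s : ℕ} {h : Seq d → ℝ} (hR : IsFCC d Γ P Q s h R) {t : ℕ}
    (hst : s ≤ t) :
    (fun ω => ENNReal.ofReal (Z d R Γ t ω)) =ᵐ[Γ] fun ω =>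
      ENNReal.ofReal (h ω) * ENNReal.ofReal (Z d P Γ t ω) +
        ENNReal.ofReal ((1 - h ω) * (Z d P Γ s ω / Z d Q Γ s ω)) *
          ENNReal.ofReal (Z d Q Γ t ω) := by
  obtain ⟨-, -, -, -, -, h_mem, h_null, -, -, hZ⟩ := hR
  have h_eq_one : ∀ᵐ ω ∂Γ, Z d Q Γ s ω = 0 → h ω = 1 := by
    filter_upwards [measure_eq_zero_iff_ae_notMem.mp h_null] with ω hω hq
    exact (h_mem ω).2.antisymm (not_lt.mp fun hlt => hω ⟨hlt, hq⟩)
  filter_upwards [hZ t, h_eq_one] with ω hω hω_one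
  have hh := h_mem ω
  have hP := Z_nonneg P Γ
  have hQ := Z_nonneg Q Γ
  have hc : 0 ≤ (1 - h ω) * (Z d P Γ s ω / Z d Q Γ s ω) :=
    mul_nonneg (sub_nonneg.mpr hh.2) (div_nonneg (hP _ _) (hQ _ _))
  rw [← ENNReal.ofReal_mul hh.1, ← ENNReal.ofReal_mul hc,
    ← ENNReal.ofReal_add (mul_nonneg hh.1 (hP _ _)) (mul_nonneg hc (hQ _ _)), hω]
  congr 1
  split_ifs with hts
  · obtain rfl : t = s := le_antisymm hts hst
    by_cases hq : Z d Q Γ t ω = 0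
    · simp only [hω_one hq, one_mul, sub_self, zero_mul, add_zero]
    · field_simp
      ring
  · ring

lemma IsFCC.isNSM [IsFiniteMeasure Γ] {s : ℕ} {h : Seq d → ℝ} (hR : IsFCC d Γ P Q s h R)
    (hMP : IsNSM d P M) (hMQ : IsNSM d Q M) : IsNSM d R M := by
  have hpost := fun t (hst : s ≤ t) => hR.ofReal_Z_ae_eq hst
  obtain ⟨_, _, hP, hQ, hh, -, -, _, hR, hZ⟩ := hR
  obtain ⟨hM_nonneg, hM, hMP⟩ := hP.isNSM_iff_ennrealSupermartingale_mul_Z.mp hMP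
  obtain ⟨-, -, hMQ⟩ := hQ.isNSM_iff_ennrealSupermartingale_mul_Z.mp hMQ
  have hratio : Measurable[F d s] fun ω => (1 - h ω) * (Z d P Γ s ω / Z d Q Γ s ω) :=
    (measurable_const.sub hh).mul ((measurable_Z P Γ s).div (measurable_Z Q Γ s))
  refine hR.isNSM_iff_ennrealSupermartingale_mul_Z.mpr ⟨hM_nonneg, hM,
    hMP.fork hMQ hh.ennreal_ofReal hratio.ennreal_ofReal (measurable_ofReal_mul_ofReal_Z hM R Γ)
      (fun t hts => ?_) fun t hst => ?_⟩
  · filter_upwards [hZ t] with ω hω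
    rw [hω, if_pos hts]
  · filter_upwards [hpost t hst] with ω hω
    rw [hω]
    ring

lemma TendstoLocL1.isNSM [IsFiniteMeasure Γ] [IsFiniteMeasure P] {Pn : ℕ → Measure (Seq d)}
    (hlim : TendstoLocL1 d Γ Pn P) [∀ n, IsFiniteMeasure (Pn n)] (hPn : ∀ n, LocAC d (Pn n) Γ)
    (hP : LocAC d P Γ) (hM : ∀ n, IsNSM d (Pn n) M) : IsNSM d P M := by
  have hM_iff := fun n => (hPn n).isNSM_iff_ennrealSupermartingale_mul_Z.mp (hM n)
  obtain ⟨hM_nonneg, hM_adapted, -⟩ := hM_iff 0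
  exact hP.isNSM_iff_ennrealSupermartingale_mul_Z.mpr ⟨hM_nonneg, hM_adapted,
    .mul_ofReal_of_tendsto (fun t => (hM_adapted t).measurable.ennreal_ofReal)
      (fun _ _ => ENNReal.ofReal_ne_top) (measurable_Z P Γ) (fun n t => integrable_Z (Pn n) Γ t)
      (integrable_Z P Γ) hlim fun n => (hM_iff n).2.2⟩

lemma isForkConvex_setOf_isNSM (Γ : Measure (Seq d)) [IsFiniteMeasure Γ] (M : ℕ → Seq d → ℝ) :
    IsForkConvex d Γ {P | IsProbabilityMeasure P ∧ LocAC d P Γ ∧ IsNSM d P M} := by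
  rintro P ⟨-, -, hMP⟩ Q ⟨-, -, hMQ⟩ s h R hR
  have hR_isNSM := hR.isNSM hMP hMQ
  obtain ⟨-, -, -, -, -, -, -, hR_prob, hR_ac, -⟩ := hR
  exact ⟨hR_prob, hR_ac, hR_isNSM⟩

lemma subset_clfconv {PP : Set (Measure (Seq d))}
    (hPP : ∀ P ∈ PP, IsProbabilityMeasure P ∧ LocAC d P Γ) : PP ⊆ clfconv d Γ PP := fun P hP =>
  ⟨(hPP P hP).1, (hPP P hP).2, fun _ => P, fun _ S hS => hS.1 hP, fun t => by
    simp only [sub_self, abs_zero, integral_zero, tendsto_const_nhds]⟩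

theorem statement2_general (Γ : Measure (Seq d)) [IsFiniteMeasure Γ]
    (PP : Set (Measure (Seq d))) (hPP : ∀ P ∈ PP, IsProbabilityMeasure P ∧ LocAC d P Γ)
    (M : ℕ → Seq d → ℝ) :
    (∀ P ∈ PP, IsNSM d P M) ↔ (∀ P ∈ clfconv d Γ PP, IsNSM d P M) := by
  refine ⟨fun hM P ⟨_, hP, Pn, hPn, hlim⟩ => ?_, fun hM P hP => hM P (subset_clfconv hPP hP)⟩
  have fconv_subset : fconv d Γ PP ⊆ {P | IsProbabilityMeasure P ∧ LocAC d P Γ ∧ IsNSM d P M} :=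
    Set.sInter_subset_of_mem ⟨fun Q hQ => ⟨(hPP Q hQ).1, (hPP Q hQ).2, hM Q hQ⟩,
      isForkConvex_setOf_isNSM Γ M⟩
  have : ∀ n, IsProbabilityMeasure (Pn n) := fun n => (fconv_subset (hPn n)).1
  exact hlim.isNSM (fun n => (fconv_subset (hPn n)).2.1) hP fun n => (fconv_subset (hPn n)).2.2

end SequenceSpace

/-- A process is an NSM for every law in `PP` iff it is an NSM for every
law in the closed fork-convex hull of `PP`. -/
theorem statement2 (Γ : Measure (Seq d)) (hΓ : IsGamma d Γ)
    (PP : Set (Measure (Seq d))) (hPP : ∀ P ∈ PP, IsProbabilityMeasure P ∧ LocAC d P Γ)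
    (M : ℕ → Seq d → ℝ) :
    (∀ P ∈ PP, IsNSM d P M) ↔ (∀ P ∈ clfconv d Γ PP, IsNSM d P M) :=
  have := hΓ.1
  statement2_general Γ PP hPP M

end SeqTest
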